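/- Let R be a ring. The following are equivalent: (1) R has a left Artinian left quotient ring Q = C⁻¹R; (2) (a) R̄ is a left Goldie ring, (b) n is a nilpotent ideal, (c') there exists a submonoid C'' ⊆ C such that the image of C'' in R̄ equals C̄ (equivalently, every element of C̄ lifts to a regular element of R), (d) for every 1 ≤ i ≤ ν the left R̄-module f_i contains no infinite direct sum of nonzero submodules, and (e) for every c̄ ∈ C̄ the right multiplication map f_i → f_i, f ↦ f·c̄, is injective. Moreover, if these hold then C'' is a left Ore set in R, C''⁻¹R = Q, C''⁻¹n is the prime radical of Q and is nilpotent of nilpotency degree ν, and the map Q/C''⁻¹n → Q̄, c⁻¹r + C''⁻¹n ↦ c̄⁻¹r̄ (where c ∈ C'' with c̄ = c + n), is a ring isomorphism. -/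

import Mathlib

open Function

universe u v

/-- A regular element of a ring: a two-sided non-zero-divisor. -/
def IsRegElem {R : Type*} [Ring R] (c : R) : Prop :=
  (∀ x : R, c * x = 0 → x = 0) ∧ (∀ x : R, x * c = 0 → x = 0)

/-- The set `C` of regular elements of a ring. -/
def regSet (R : Type*) [Ring R] : Set R := {c : R | IsRegElem c}

/-- A (left) ideal is two-sided. -/
def Ideal.IsTwoSidedNC {R : Type*} [Ring R] (I : Ideal R) : Prop :=
  ∀ a ∈ I, ∀ r : R, a * r ∈ I

/-- A prime (two-sided) ideal of a possibly noncommutative ring. -/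
def Ideal.IsPrimeNC {R : Type*} [Ring R] (P : Ideal R) : Prop :=
  P ≠ ⊤ ∧ P.IsTwoSidedNC ∧ ∀ a b : R, (∀ r : R, a * r * b ∈ P) → a ∈ P ∨ b ∈ P

/-- The prime radical `n` of a ring: the intersection of all prime ideals. -/
def primeRadical (R : Type*) [Ring R] : Ideal R := sInf {P : Ideal R | P.IsPrimeNC}

/-- `n` is a nilpotent ideal. -/
def IsNilpotentIdeal {R : Type*} [Ring R] (I : Ideal R) : Prop := ∃ k : ℕ, I ^ (k + 1) = ⊥

/-- `φ : R →+* Q` realizes `Q` as a left quotient ring `C⁻¹R` of `R`:  `R` embeds in `Q`,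
every regular element of `R` becomes invertible in `Q`, and every element of `Q` has the
form `(φ c)⁻¹ * (φ r)` with `c` regular. -/
structure IsLeftQuotRing {R : Type u} {Q : Type v} [Ring R] [Ring Q] (φ : R →+* Q) : Prop where
  inj : Function.Injective φ
  isUnit : ∀ c : R, IsRegElem c → IsUnit (φ c)
  denom : ∀ q : Q, ∃ c r : R, IsRegElem c ∧ φ c * q = φ r

/-- Data of a left quotient ring of `R`. -/
structure LeftQuotData (R : Type u) [Ring R] : Type (u + 1) where
  Q : Type u
  [instQ : Ring Q]
  φ : R →+* Q
  quot : IsLeftQuotRing φ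

attribute [instance] LeftQuotData.instQ

/-- `R` has a left Artinian left quotient ring `Q = C⁻¹R`. -/
def HasArtinianLeftQuot (R : Type u) [Ring R] : Prop :=
  ∃ d : LeftQuotData R, IsArtinianRing d.Q

/-- A subset of a ring is a left annihilator. -/
def IsLeftAnnihilatorSet {R : Type*} [Ring R] (A : Set R) : Prop :=
  ∃ S : Set R, A = {r : R | ∀ s ∈ S, r * s = 0}

/-- The ascending chain condition on left annihilators. -/
def ACCLeftAnnihilators (R : Type*) [Ring R] : Prop :=
  ∀ f : ℕ → Set R, (∀ i, IsLeftAnnihilatorSet (f i)) → (∀ i j, i ≤ j → f i ⊆ f j) →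
    ∃ N, ∀ k, N ≤ k → f k = f N

/-- The module `M` contains no infinite direct sum of nonzero submodules. -/
def NoInfiniteIndepFamily (R : Type*) (M : Type*) [Ring R] [AddCommGroup M] [Module R M] : Prop :=
  ¬ ∃ f : ℕ → Submodule R M, (∀ i, f i ≠ ⊥) ∧ iSupIndep f

/-- A left Goldie ring: ACC on left annihilators and no infinite direct sums of nonzero
left ideals. -/
def IsLeftGoldie (R : Type*) [Ring R] : Prop :=
  ACCLeftAnnihilators R ∧ NoInfiniteIndepFamily R R

/-- The subquotient `n^i/n^{i+1}` of `R` determined by the prime radical `n`. -/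
abbrev grPiece (R : Type*) [Ring R] (i : ℕ) :=
  ↥(primeRadical R ^ i) ⧸
    (Submodule.comap (primeRadical R ^ i : Ideal R).subtype (primeRadical R ^ (i + 1)))

/-- The class of `x ∈ n^i` in `n^i/n^{i+1}`. -/
def grMk {R : Type*} [Ring R] (i : ℕ) (x : R) (hx : x ∈ primeRadical R ^ i) : grPiece R i :=
  Submodule.Quotient.mk ⟨x, hx⟩

/-- The `C̄`-torsion submodule `τ_i` of `n^i/n^{i+1}` (take the span, which coincides with the
set of torsion elements whenever the latter is a submodule, e.g. when `C̄` is a left Ore set);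
here `C̄` is represented through `π : R → R̄` as `{c : R | IsRegElem (π c)}`. -/
def tauSub {R : Type u} {Rbar : Type v} [Ring R] [Ring Rbar] (π : R →+* Rbar) (i : ℕ) :
    Submodule R (grPiece R i) :=
  Submodule.span R {u : grPiece R i | ∃ c : R, IsRegElem (π c) ∧ c • u = 0}

/-- The `C̄`-torsionfree module `f_i = (n^i/n^{i+1})/τ_i`. -/
abbrev fMod {R : Type u} {Rbar : Type v} [Ring R] [Ring Rbar] (π : R →+* Rbar) (i : ℕ) :=
  grPiece R i ⧸ tauSub π i

/-- The class of `x ∈ n^i` in `f_i`. -/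
def fMk {R : Type u} {Rbar : Type v} [Ring R] [Ring Rbar] (π : R →+* Rbar) (i : ℕ) (x : R)
    (hx : x ∈ primeRadical R ^ i) : fMod π i :=
  Submodule.Quotient.mk (grMk i x hx)

/-- The subset `C⁻¹K = {(φ c)⁻¹ (φ a) : c ∈ C, a ∈ K}` of a left quotient ring. -/
def locSet {R : Type u} {Q : Type v} [Ring R] [Ring Q] (φ : R →+* Q) (K : Ideal R) : Set Q :=
  {q : Q | ∃ c a : R, IsRegElem c ∧ a ∈ K ∧ φ c * q = φ a}

/-- A subset of a ring is a left Ore set (multiplicatively closed and satisfying the left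
Ore condition). -/
def IsLeftOreSubset {A : Type*} [Ring A] (S : Set A) : Prop :=
  (1 : A) ∈ S ∧ (∀ s ∈ S, ∀ t ∈ S, s * t ∈ S) ∧
    ∀ s ∈ S, ∀ a : A, ∃ t ∈ S, ∃ b : A, t * a = b * s

/-- A left denominator set. -/
def IsLeftDenominatorSet {A : Type*} [Ring A] (S : Set A) : Prop :=
  IsLeftOreSubset S ∧ ∀ a : A, ∀ s ∈ S, a * s = 0 → ∃ t ∈ S, t * a = 0

/-!
The argument runs along the `n`-adic filtration of `R`.

By Goldie's regular element lemma, an essential submodule of a torsion-free module over a semiprime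
left Goldie ring has torsion quotient, so finite uniform dimension of `f_i` gives the descending
chain condition on `n ^ i / n ^ (i + 1)` up to `C''`-torsion. Applied to the chain `n ^ i * s ^ k`,
with `s` cancelled by condition (e), this yields the left Ore condition for `C''` one layer at a
time; applied to traces of left ideals of `C''⁻¹R`, it makes `C''⁻¹R` left Artinian.

Conversely, if `Q` is left Artinian with prime radical `J`, then `n = J ∩ R` and
`C⁻¹(n ^ i) = J ^ i`, so `R / n` embeds in `Q / J`, and regularity can be tested modulo `n` because
units lift modulo the nilpotent ideal `J`. Nilpotency also allows denominators to be moved from `C`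
into `C''`, gaining one power of `J` at each step.
-/

section Essential

variable {A M : Type*} [Ring A] [AddCommGroup M] [Module A M]

/-- `P` is essential in `N`: every nonzero element of `N` has a nonzero multiple in `P`. The
inclusion `P ≤ N` is not required, so that `P` may also be compared with larger submodules. -/
def IsEssentialIn (P N : Submodule A M) : Prop :=
  ∀ x ∈ N, x ≠ 0 → ∃ r : A, r • x ≠ 0 ∧ r • x ∈ P

theorem iSupIndep_of_antitone_of_disjoint {L D : ℕ → Submodule A M} (hD : Antitone D)
    (hL : ∀ i, L i ≤ D i) (hLD : ∀ i, Disjoint (L i) (D (i + 1))) : iSupIndep L := by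
  classical
  rw [iSupIndep_iff_finsetSum_eq_zero_imp_eq_zero]
  intro s v hv hsum
  by_contra! hne
  have hex : ∃ i, i ∈ s ∧ v i ≠ 0 := hne
  set i := Nat.find hex
  obtain ⟨his, hi⟩ : i ∈ s ∧ v i ≠ 0 := Nat.find_spec hex
  have hmin : ∀ j ∈ s, j < i → v j = 0 := fun j hj hji =>
    by_contra fun h => Nat.find_min hex hji ⟨hj, h⟩
  have hrest : ∑ j ∈ s.erase i, v j ∈ D (i + 1) := by
    refine Submodule.sum_mem _ fun j hj => ?_
    obtain ⟨hji, hjs⟩ := Finset.mem_erase.mp hj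
    rcases lt_or_gt_of_ne hji with hlt | hgt
    · simp [hmin j hjs hlt]
    · exact hD hgt (hL j (hv j hjs))
  have hvi : v i = -∑ j ∈ s.erase i, v j :=
    eq_neg_of_add_eq_zero_left (by rw [Finset.add_sum_erase s v his, hsum])
  exact hi (Submodule.disjoint_def.mp (hLD i) _ (hv i his) (hvi ▸ neg_mem hrest))

theorem NoInfiniteIndepFamily.wellFounded_not_isEssentialIn (h : NoInfiniteIndepFamily A M) :
    WellFounded fun P N : Submodule A M => P ≤ N ∧ ¬ IsEssentialIn P N := by
  rw [wellFounded_iff_isEmpty_descending_chain]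
  refine ⟨fun ⟨D, hD⟩ => ?_⟩
  simp only [IsEssentialIn, not_forall, not_exists, not_and] at hD
  choose hle x hxD hx0 hx using hD
  refine h ⟨fun i => Submodule.span A {x i}, fun i => ?_, ?_⟩
  · simpa only [ne_eq, Submodule.span_singleton_eq_bot] using hx0 i
  · refine iSupIndep_of_antitone_of_disjoint (antitone_nat_of_succ_le hle) (fun i => ?_)
      fun i => Submodule.disjoint_def.mpr fun y hy hyD => ?_
    · simpa only [Submodule.span_singleton_le_iff_mem] using hxD i
    · obtain ⟨r, rfl⟩ := Submodule.mem_span_singleton.mp hy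
      exact by_contra fun hne => hx i r hne hyD

theorem NoInfiniteIndepFamily.exists_forall_isEssentialIn (h : NoInfiniteIndepFamily A M)
    {D : ℕ → Submodule A M} (hD : Antitone D) : ∃ N, ∀ k ≥ N, IsEssentialIn (D k) (D N) := by
  obtain ⟨_, ⟨N, rfl⟩, hN⟩ :=
    h.wellFounded_not_isEssentialIn.has_min (Set.range D) (Set.range_nonempty D)
  exact ⟨N, fun k hk => by_contra fun hne => hN _ ⟨k, rfl⟩ ⟨hD hk, hne⟩⟩

end Essential

section Goldie

open Ideal (torsionOf mem_torsionOf_iff)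

variable {A : Type*} [Ring A]

theorem isLeftAnnihilatorSet_torsionOf (a : A) : IsLeftAnnihilatorSet (torsionOf A A a : Set A) :=
  ⟨{a}, by ext; simp⟩

namespace ACCLeftAnnihilators

theorem exists_maximal (h : ACCLeftAnnihilators A) {T : Set A} (hT : T.Nonempty) :
    ∃ a ∈ T, ∀ b ∈ T, torsionOf A A a ≤ torsionOf A A b → torsionOf A A b ≤ torsionOf A A a := by
  have hwf : WellFoundedGT {S : Set A // IsLeftAnnihilatorSet S} := by
    rw [wellFoundedGT_iff_monotone_chain_condition]
    intro f
    obtain ⟨N, hN⟩ := h (fun i => (f i).1) (fun i => (f i).2) fun i j hij => f.monotone hij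
    exact ⟨N, fun m hm => Subtype.ext (hN m hm).symm⟩
  let ann (a : A) : {S : Set A // IsLeftAnnihilatorSet S} :=
    ⟨torsionOf A A a, isLeftAnnihilatorSet_torsionOf a⟩
  obtain ⟨_, ⟨a, haT, rfl⟩, hmax⟩ := hwf.wf.has_min (ann '' T) (hT.image ann)
  exact ⟨a, haT, fun b hb hab => by_contra fun hba =>
    hmax (ann b) ⟨b, hb, rfl⟩ (lt_of_le_not_ge hab hba)⟩

theorem exists_pow (h : ACCLeftAnnihilators A) (a : A) :
    ∃ N, ∀ k ≥ N, ∀ r : A, r * a ^ k = 0 → r * a ^ N = 0 := by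
  obtain ⟨N, hN⟩ := h (fun k => torsionOf A A (a ^ k))
    (fun k => isLeftAnnihilatorSet_torsionOf _) fun i j hij r hr => by
      obtain ⟨m, rfl⟩ := Nat.exists_eq_add_of_le hij
      have hr : r * a ^ i = 0 := hr
      change r * a ^ (i + m) = 0
      rw [pow_add, ← mul_assoc, hr, zero_mul]
  exact ⟨N, fun k hk r hr => (hN k hk).subset hr⟩

end ACCLeftAnnihilators

/-- A semiprime ring, in the elementwise form: `a A a = 0` implies `a = 0`. -/
def IsSemiprimeNC (A : Type*) [Ring A] : Prop := ∀ a : A, (∀ r : A, a * r * a = 0) → a = 0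

theorem isNilpotent_mul_swap {a b : A} (h : IsNilpotent (a * b)) : IsNilpotent (b * a) := by
  obtain ⟨k, hk⟩ := h
  exact ⟨k + 1, by rw [pow_succ, ← mul_assoc, mul_pow_mul, hk, mul_zero, zero_mul]⟩

namespace IsSemiprimeNC

theorem eq_zero_of_forall_isNilpotent_mul (hs : IsSemiprimeNC A) (h : ACCLeftAnnihilators A) {x : A}
    (hx : ∀ y : A, IsNilpotent (y * x)) : x = 0 := by
  by_contra hx0
  obtain ⟨a, ⟨⟨y, rfl⟩, ha0⟩, hmax⟩ := h.exists_maximal (T := {a | (∃ y, a = x * y) ∧ a ≠ 0})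
    ⟨x, ⟨1, by simp⟩, hx0⟩
  refine ha0 (hs _ fun r => by_contra fun hr => ?_)
  set z := x * y * r with hz
  -- by maximality all nonzero powers of `z` have the left annihilator of `x * y`
  have hpow : ∀ m, z ^ (m + 1) ≠ 0 := by
    intro m
    induction m with
    | zero => exact fun h0 => hr (by rw [← pow_one z, h0, zero_mul])
    | succ m ih =>
      refine fun h0 => hr (hmax (z ^ (m + 1)) ⟨⟨y * r * z ^ m, ?_⟩, ih⟩ (fun s hs => ?_) ?_)
      · rw [pow_succ', hz]
        simp only [mul_assoc]
      · have hs : s * (x * y) = 0 := hs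
        change s * z ^ (m + 1) = 0
        rw [pow_succ', ← mul_assoc, hz, ← mul_assoc, hs, zero_mul, zero_mul]
      · rwa [pow_succ'] at h0
  obtain ⟨k, hk⟩ : IsNilpotent z := by
    rw [hz, mul_assoc]
    exact isNilpotent_mul_swap (hx _)
  exact hpow k (by rw [pow_succ, hk, zero_mul])

theorem eq_zero_of_isEssentialIn_torsionOf (hs : IsSemiprimeNC A) (h : ACCLeftAnnihilators A)
    {x : A} (hx : IsEssentialIn (torsionOf A A x) ⊤) : x = 0 := by
  refine hs.eq_zero_of_forall_isNilpotent_mul h fun y => ?_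
  obtain ⟨N, hN⟩ := h.exists_pow (y * x)
  suffices hNy : (y * x) ^ N * y = 0 from ⟨N + 1, by rw [pow_succ, ← mul_assoc, hNy, zero_mul]⟩
  by_contra hne
  obtain ⟨t, ht, htx⟩ := hx _ trivial hne
  rw [mem_torsionOf_iff] at htx
  simp only [smul_eq_mul, mul_assoc] at ht htx
  refine ht ?_
  rw [← mul_assoc, hN (N + 1) N.le_succ t (by rw [pow_succ, htx]), zero_mul]

end IsSemiprimeNC

theorem NoInfiniteIndepFamily.isEssentialIn_span_singleton (h : NoInfiniteIndepFamily A A) {c : A}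
    (hc : ∀ x, x * c = 0 → x = 0) : IsEssentialIn (Ideal.span {c}) ⊤ := by
  intro a _ ha
  have hpow (n : ℕ) : ∀ x, x * c ^ n = 0 → x = 0 := by
    induction n with
    | zero => simp
    | succ n ih => exact fun x hx => ih _ (hc _ (by rwa [mul_assoc, ← pow_succ]))
  obtain ⟨N, hN⟩ := h.exists_forall_isEssentialIn (D := fun n => Ideal.span {c ^ n})
    (antitone_nat_of_succ_le fun n => by
      rw [Ideal.span_singleton_le_iff_mem, Ideal.mem_span_singleton']
      exact ⟨c, (pow_succ' c n).symm⟩)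
  obtain ⟨r, hr0, hr⟩ := hN (N + 1) N.le_succ (a * c ^ N) (Ideal.mem_span_singleton'.mpr ⟨a, rfl⟩)
    fun h0 => ha (hpow N a h0)
  obtain ⟨b, hb⟩ := Ideal.mem_span_singleton'.mp hr
  have hrab : b * c = r * a := sub_eq_zero.mp <| hpow N _ <| by
    rw [sub_mul, mul_assoc, ← pow_succ', hb, smul_eq_mul, mul_assoc, sub_self]
  refine ⟨r, fun h0 => hr0 ?_, Ideal.mem_span_singleton'.mpr ⟨b, hrab⟩⟩
  rw [smul_eq_mul] at h0 ⊢
  rw [← mul_assoc, h0, zero_mul]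

/-- An element whose left annihilator agrees with that of its square. -/
def IsAnnStable (c : A) : Prop := ∀ r : A, r * c * c = 0 → r * c = 0

theorem IsSemiprimeNC.exists_isAnnStable_mem (hs : IsSemiprimeNC A) (h : ACCLeftAnnihilators A)
    {L : Ideal A} (hL : L ≠ ⊥) : ∃ a ∈ L, a ≠ 0 ∧ IsAnnStable a := by
  obtain ⟨x, hxL, hx0⟩ := L.ne_bot_iff.mp hL
  obtain ⟨y, hy⟩ : ∃ y, ¬ IsNilpotent (y * x) := by
    by_contra! hnil
    exact hx0 (hs.eq_zero_of_forall_isNilpotent_mul h hnil)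
  obtain ⟨N, hN⟩ := h.exists_pow (y * x)
  refine ⟨(y * x) ^ (N + 1), ?_, fun h0 => hy ⟨_, h0⟩, fun r hr => ?_⟩
  · rw [pow_succ]
    exact L.mul_mem_left _ (L.mul_mem_left _ hxL)
  · have hrN := hN (N + 1 + (N + 1)) (by omega) r (by rwa [pow_add, ← mul_assoc])
    rw [pow_succ, ← mul_assoc, hrN, zero_mul]

namespace IsAnnStable

variable {c a : A}

theorem mul_eq_zero_of_mul_add_eq_zero (hc : IsAnnStable c) (hac : a * c = 0) {r : A}
    (hr : r * (c + a) = 0) : r * c = 0 ∧ r * a = 0 := by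
  have hrc : r * c = 0 := hc r <| by
    calc r * c * c = r * (c + a) * c := by rw [mul_add, add_mul, mul_assoc r a, hac]; simp
      _ = 0 := by rw [hr, zero_mul]
  rw [mul_add, hrc, zero_add] at hr
  exact ⟨hrc, hr⟩

theorem add (hc : IsAnnStable c) (ha : IsAnnStable a) (hac : a * c = 0) :
    IsAnnStable (c + a) := by
  intro r hr
  obtain ⟨hrc, hra⟩ := hc.mul_eq_zero_of_mul_add_eq_zero hac hr
  have hrc : r * c = 0 := hc r <| by simpa [mul_add, add_mul, mul_assoc, hac] using hrc
  have hra : r * a = 0 := ha r <| by simpa [mul_add, add_mul, hrc] using hra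
  rw [mul_add, hrc, hra, add_zero]

end IsAnnStable

namespace IsLeftGoldie

theorem isRegElem_of_forall_mul_eq_zero (h : IsLeftGoldie A) (hs : IsSemiprimeNC A) {c : A}
    (hc : ∀ x, x * c = 0 → x = 0) : IsRegElem c := by
  refine ⟨fun x hx => hs.eq_zero_of_isEssentialIn_torsionOf h.1 fun a ha ha0 => ?_, hc⟩
  obtain ⟨t, ht, htc⟩ := h.2.isEssentialIn_span_singleton hc a ha ha0
  obtain ⟨b, hb⟩ := Ideal.mem_span_singleton'.mp htc
  refine ⟨t, ht, ?_⟩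
  rw [mem_torsionOf_iff, smul_eq_mul, ← hb, mul_assoc, hx, mul_zero]

/-- Goldie's regular element lemma. The witness is an annihilator-stable element of `E` whose
left annihilator cannot be shrunk inessentially: were that annihilator nonzero, it would meet
`E` in a nonzero stable `a`, and `c + a` would have the smaller annihilator `ann c ∩ ann a`. -/
theorem exists_isRegElem_mem (h : IsLeftGoldie A) (hs : IsSemiprimeNC A) {E : Ideal A}
    (hE : IsEssentialIn E ⊤) : ∃ c ∈ E, IsRegElem c := by
  obtain ⟨c, ⟨hcE, hc⟩, hmin⟩ :=
    (InvImage.wf (torsionOf A A) h.2.wellFounded_not_isEssentialIn).has_min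
      {c | c ∈ E ∧ IsAnnStable c} ⟨0, E.zero_mem, by simp [IsAnnStable]⟩
  refine ⟨c, hcE, h.isRegElem_of_forall_mul_eq_zero hs ?_⟩
  by_contra! hne
  obtain ⟨x, hxc, hx0⟩ := hne
  have hmeet : E ⊓ torsionOf A A c ≠ ⊥ := by
    obtain ⟨t, htx, htE⟩ := hE x trivial hx0
    exact (Submodule.ne_bot_iff _).mpr ⟨_, ⟨htE, Submodule.smul_mem _ t hxc⟩, htx⟩
  obtain ⟨a, ⟨haE, hac⟩, ha0, ha⟩ := hs.exists_isAnnStable_mem h.1 hmeet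
  refine hmin (c + a) ⟨E.add_mem hcE haE, hc.add ha hac⟩ ⟨fun r hr => ?_, fun hess => ?_⟩
  · exact (hc.mul_eq_zero_of_mul_add_eq_zero hac hr).1
  · obtain ⟨r, hra, hr⟩ := hess a hac ha0
    exact hra (ha r (hc.mul_eq_zero_of_mul_add_eq_zero hac hr).2)

theorem exists_isRegElem_smul_mem {B M : Type*} [Ring B] [AddCommGroup M] [Module A M]
    (hB : IsLeftGoldie B) (hs : IsSemiprimeNC B) {π : A →+* B} (hsurj : Surjective π)
    (hker : RingHom.ker π ≤ Module.annihilator A M) {P N : Submodule A M} (hPN : IsEssentialIn P N)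
    {x : M} (hx : x ∈ N) : ∃ c : A, IsRegElem (π c) ∧ c • x ∈ P := by
  let E : Ideal A := P.comap (LinearMap.toSpanSingleton A M x)
  have hE : IsEssentialIn (E.map π) ⊤ := by
    intro b _ hb
    obtain ⟨a, rfl⟩ := hsurj b
    by_cases hax : a • x = 0
    · exact ⟨1, by rwa [one_smul],
        (one_smul B (π a)).symm ▸ Ideal.mem_map_of_mem π (by simp [E, hax])⟩
    · obtain ⟨r, hr0, hr⟩ := hPN (a • x) (N.smul_mem a hx) hax
      rw [← mul_smul] at hr0 hr
      refine ⟨π r, fun h0 => hr0 (Module.mem_annihilator.mp (hker ?_) x), ?_⟩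
      · rwa [RingHom.mem_ker, map_mul]
      · rw [smul_eq_mul, ← map_mul]
        exact Ideal.mem_map_of_mem π (by simpa [E] using hr)
  obtain ⟨_, hcE, hc⟩ := hB.exists_isRegElem_mem hs hE
  obtain ⟨c, hcP, rfl⟩ := (Ideal.mem_map_iff_of_surjective π hsurj).mp hcE
  exact ⟨c, hc, by simpa [E] using hcP⟩

theorem isLeftOreSubset_regSet (h : IsLeftGoldie A) (hs : IsSemiprimeNC A) :
    IsLeftOreSubset (regSet A) := by
  refine ⟨⟨by simp, by simp⟩, fun s hs t ht => ⟨fun x hx => ?_, fun x hx => ?_⟩, fun c hc a => ?_⟩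
  · exact ht.1 x (hs.1 _ (by rwa [← mul_assoc]))
  · exact hs.2 x (ht.2 _ (by rwa [mul_assoc]))
  · obtain ⟨t, ht, hta⟩ := h.exists_isRegElem_smul_mem hs (π := RingHom.id A) surjective_id
      (by rintro _ rfl; exact zero_mem _) (h.2.isEssentialIn_span_singleton hc.2) (x := a) trivial
    obtain ⟨b, hb⟩ := Ideal.mem_span_singleton'.mp hta
    exact ⟨t, ht, b, hb.symm⟩

end IsLeftGoldie

end Goldie

section Fractions

variable {R Q : Type*} [Ring R] [Ring Q] {φ : R →+* Q}

theorem isRegElem_of_isUnit_map (hinj : Injective φ) {c : R} (hc : IsUnit (φ c)) :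
    IsRegElem c := by
  refine ⟨fun x hx => hinj ?_, fun x hx => hinj ?_⟩
  · rw [map_zero, ← hc.mul_right_eq_zero, ← map_mul, hx, map_zero]
  · rw [map_zero, ← hc.mul_left_eq_zero, ← map_mul, hx, map_zero]

theorem isLeftQuotRing_of_injective [IsArtinianRing Q] (hinj : Injective φ)
    (hden : ∀ q, ∃ c r, IsUnit (φ c) ∧ φ c * q = φ r) : IsLeftQuotRing φ where
  inj := hinj
  isUnit c hc := by
    rw [IsArtinianRing.isUnit_iff_isRightRegular, isRightRegular_iff_left_eq_zero_of_mul]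
    intro q hq
    obtain ⟨d, r, hd, hr⟩ := hden q
    have hrc : r * c = 0 := hinj (by rw [map_mul, ← hr, mul_assoc, hq, mul_zero, map_zero])
    rwa [hc.2 r hrc, map_zero, hd.mul_right_eq_zero] at hr
  denom q :=
    let ⟨c, r, hc, hr⟩ := hden q
    ⟨c, r, isRegElem_of_isUnit_map hinj hc, hr⟩

theorem isLeftOreSubset_of_forall_exists_mul_eq {S : Submonoid R} (hinj : Injective φ)
    (hunit : ∀ s ∈ S, IsUnit (φ s)) (hden : ∀ q, ∃ s ∈ S, ∃ r, φ s * q = φ r) :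
    IsLeftOreSubset (S : Set R) := by
  refine ⟨S.one_mem, fun s hs t ht => S.mul_mem hs ht, fun s hs a => ?_⟩
  obtain ⟨u, hu⟩ := hunit s hs
  obtain ⟨t, ht, b, hb⟩ := hden (φ a * ↑u⁻¹)
  exact ⟨t, ht, b, hinj (by rw [map_mul, map_mul, ← hb, ← hu, mul_assoc,
    Units.inv_mul_cancel_right])⟩

end Fractions

section Layers

variable {R Q : Type*} [Ring R] [Ring Q]

/-- On the layer `I ^ i / I ^ (i + 1)` of the `I`-adic filtration, the image of `D ∩ I ^ i` is
`S`-torsion modulo the image of `D' ∩ I ^ i`. -/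
def IsLayerTorsion (I : Ideal R) (S : Submonoid R) (i : ℕ) (D' D : Ideal R) : Prop :=
  ∀ x ∈ D, x ∈ I ^ i → ∃ s ∈ S, ∃ y ∈ D', y ∈ I ^ i ∧ s * x - y ∈ I ^ (i + 1)

/-- The descending chain condition, up to `S`-torsion, for the traces of left ideals on the layer
`I ^ i / I ^ (i + 1)`. -/
def LayerChainCondition (I : Ideal R) (S : Submonoid R) (i : ℕ) : Prop :=
  ∀ D : ℕ → Ideal R, Antitone D → ∃ N, ∀ k ≥ N, IsLayerTorsion I S i (D k) (D N)

/-- Right multiplication by elements of `S` is injective on `I ^ i / I ^ (i + 1)` modulo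
`S`-torsion. -/
def LayerRightCancel (I : Ideal R) (S : Submonoid R) (i : ℕ) : Prop :=
  ∀ s ∈ S, ∀ x ∈ I ^ i, (∃ t ∈ S, t * (x * s) ∈ I ^ (i + 1)) → ∃ t ∈ S, t * x ∈ I ^ (i + 1)

variable {I : Ideal R} {S : Submonoid R} {i : ℕ}

theorem exists_mul_sub_mem_pow {D' D : Ideal R} (hle : D' ≤ D)
    (h : ∀ j < i, IsLayerTorsion I S j D' D) {x : R} (hx : x ∈ D) :
    ∃ s ∈ S, ∃ y ∈ D', s * x - y ∈ I ^ i := by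
  induction i with
  | zero => exact ⟨1, S.one_mem, 0, D'.zero_mem, by simp [Submodule.pow_zero, Ideal.one_eq_top]⟩
  | succ i ih =>
    obtain ⟨s, hs, y, hy, hsy⟩ := ih fun j hj => h j (hj.trans i.lt_succ_self)
    obtain ⟨t, ht, z, hz, -, htz⟩ := h i i.lt_succ_self (s * x - y)
      (D.sub_mem (D.mul_mem_left s hx) (hle hy)) hsy
    refine ⟨t * s, S.mul_mem ht hs, t * y + z, D'.add_mem (D'.mul_mem_left t hy) hz, ?_⟩
    rwa [mul_sub, sub_sub, ← mul_assoc] at htz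

variable [I.IsTwoSided]

theorem LayerRightCancel.pow (h : LayerRightCancel I S i) {s : R} (hs : s ∈ S) (k : ℕ) {x : R}
    (hx : x ∈ I ^ i) (hxs : x * s ^ k ∈ I ^ (i + 1)) : ∃ t ∈ S, t * x ∈ I ^ (i + 1) := by
  suffices ∀ k, ∀ x ∈ I ^ i, (∃ t ∈ S, t * (x * s ^ k) ∈ I ^ (i + 1)) →
      ∃ t ∈ S, t * x ∈ I ^ (i + 1) from this k x hx ⟨1, S.one_mem, by rwa [one_mul]⟩
  intro k
  induction k with
  | zero => simp
  | succ k ih =>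
    refine fun x hx ht => ih x hx (h s hs _ (Ideal.mul_mem_right _ _ hx) ?_)
    rwa [mul_assoc, ← pow_succ]

/-- The chain `I ^ i * s ^ k` is eventually torsion on the layer; cancelling the power of `s`
on the right brings this back to `k = 0`. -/
theorem isLayerTorsion_span_singleton (hchain : LayerChainCondition I S i)
    (hcancel : LayerRightCancel I S i) {s : R} (hs : s ∈ S) :
    IsLayerTorsion I S i (Ideal.span {s}) ⊤ := by
  intro x _ hx
  let D (k : ℕ) : Ideal R := Submodule.map (LinearMap.toSpanSingleton R R (s ^ k)) (I ^ i)
  have hD : Antitone D := antitone_nat_of_succ_le fun k => by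
    rintro _ ⟨y, hy, rfl⟩
    exact ⟨y * s, Ideal.mul_mem_right _ _ hy, by simp [pow_succ', mul_assoc]⟩
  obtain ⟨N, hN⟩ := hchain D hD
  obtain ⟨t, ht, _, ⟨b, hb, rfl⟩, -, htb⟩ :=
    hN (N + 1) N.le_succ (x * s ^ N) ⟨x, hx, rfl⟩ (Ideal.mul_mem_right _ _ hx)
  have hcancelled : (t * x - b * s) * s ^ N ∈ I ^ (i + 1) := by
    simpa [pow_succ', sub_mul, mul_assoc] using htb
  have hb : b * s ∈ I ^ i := Ideal.mul_mem_right _ _ hb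
  obtain ⟨t', ht', ht'b⟩ := hcancel.pow hs N (sub_mem (Ideal.mul_mem_left _ _ hx) hb) hcancelled
  refine ⟨t' * t, S.mul_mem ht' ht, t' * (b * s), ?_, Ideal.mul_mem_left _ _ hb, ?_⟩
  · exact Ideal.mul_mem_left _ _ (Ideal.mul_mem_left _ _ (Ideal.mem_span_singleton_self s))
  · rwa [mul_assoc, ← mul_sub]

theorem isLeftOreSubset_of_layers {K : ℕ} (hK : I ^ K = ⊥)
    (hchain : ∀ i < K, LayerChainCondition I S i) (hcancel : ∀ i < K, LayerRightCancel I S i) :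
    IsLeftOreSubset (S : Set R) := by
  refine ⟨S.one_mem, fun s hs t ht => S.mul_mem hs ht, fun s hs a => ?_⟩
  obtain ⟨t, ht, y, hy, hty⟩ := exists_mul_sub_mem_pow (i := K) le_top
    (fun i hi => isLayerTorsion_span_singleton (hchain i hi) (hcancel i hi) hs)
    (Submodule.mem_top (x := a))
  obtain ⟨b, rfl⟩ := Ideal.mem_span_singleton'.mp hy
  exact ⟨t, ht, b, sub_eq_zero.mp (by rwa [hK, Ideal.mem_bot] at hty)⟩

omit [I.IsTwoSided]

theorem isArtinianRing_of_layerChainCondition {K : ℕ} (hK : I ^ K = ⊥)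
    (hchain : ∀ i < K, LayerChainCondition I S i) {φ : R →+* Q} (hunit : ∀ s ∈ S, IsUnit (φ s))
    (hden : ∀ q, ∃ s ∈ S, ∃ r, φ s * q = φ r) : IsArtinianRing Q := by
  rw [isArtinianRing_iff, ← monotone_stabilizes_iff_artinian]
  intro F
  let D (k : ℕ) : Ideal R := Ideal.comap φ (F k).ofDual
  have hD : Antitone D := fun i j hij => Ideal.comap_mono (F.monotone hij)
  choose! N hN using fun i hi => hchain i hi D hD
  let M := (Finset.range K).sup N
  have hNM : ∀ i < K, N i ≤ M := fun i hi => Finset.le_sup (Finset.mem_range.mpr hi)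
  refine ⟨M, fun k hk => (F.monotone hk).antisymm fun q hq => ?_⟩
  obtain ⟨s, hs, r, hr⟩ := hden q
  have hrD : r ∈ D M := by
    rw [Ideal.mem_comap, ← hr]
    exact Ideal.mul_mem_left _ _ hq
  obtain ⟨t, ht, y, hy, hty⟩ := exists_mul_sub_mem_pow (hD hk)
    (fun i hi x hx => hN i hi k ((hNM i hi).trans hk) x (hD (hNM i hi) hx)) hrD
  rw [hK, Ideal.mem_bot, sub_eq_zero] at hty
  have htr : φ t * (φ s * q) ∈ (F k).ofDual := by
    rwa [hr, ← map_mul, hty, ← Ideal.mem_comap]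
  rwa [Ideal.unit_mul_mem_iff_mem _ (hunit t ht), Ideal.unit_mul_mem_iff_mem _ (hunit s hs)] at htr

theorem nonempty_oreSet_of_isLeftOreSubset (hreg : (S : Set R) ⊆ regSet R)
    (hS : IsLeftOreSubset (S : Set R)) : Nonempty (OreLocalization.OreSet S) := by
  rw [OreLocalization.nonempty_oreSet_iff]
  refine ⟨fun r₁ r₂ s h => ⟨1, ?_⟩, fun r s => ?_⟩
  · rw [sub_eq_zero.mp ((hreg s.2).2 (r₁ - r₂) (by rw [sub_mul, h, sub_self]))]
  · obtain ⟨t, ht, b, hb⟩ := hS.2.2 s s.2 r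
    exact ⟨b, ⟨t, ht⟩, hb⟩

end Layers

theorem hasArtinianLeftQuot_of_layers {R : Type u} [Ring R] {I : Ideal R} [I.IsTwoSided]
    {S : Submonoid R} (hreg : (S : Set R) ⊆ regSet R) {K : ℕ} (hK : I ^ K = ⊥)
    (hchain : ∀ i < K, LayerChainCondition I S i) (hcancel : ∀ i < K, LayerRightCancel I S i) :
    HasArtinianLeftQuot R := by
  obtain ⟨_⟩ :=
    nonempty_oreSet_of_isLeftOreSubset hreg (isLeftOreSubset_of_layers hK hchain hcancel)
  let φ : R →+* OreLocalization S R := OreLocalization.numeratorRingHom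
  have hinj : Injective φ := OreLocalization.numeratorHom_inj fun s hs => (hreg hs).1
  have hunit : ∀ s ∈ S, IsUnit (φ s) := fun s hs => OreLocalization.numerator_isUnit ⟨s, hs⟩
  have hden : ∀ q, ∃ s ∈ S, ∃ r, φ s * q = φ r := fun q => by
    induction q using OreLocalization.ind with
    | _ r s => exact ⟨s, s.2, r, OreLocalization.mul_cancel⟩
  have hart := isArtinianRing_of_layerChainCondition hK hchain hunit hden
  exact ⟨⟨_, φ, isLeftQuotRing_of_injective hinj fun q =>
    let ⟨s, hs, r, hr⟩ := hden q
    ⟨s, r, hunit s hs, hr⟩⟩, hart⟩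

section PrimeRadical

variable {R : Type*} [Ring R]

theorem le_of_isPrimeNC_of_pow_le {I P : Ideal R} [I.IsTwoSided] (hP : P.IsPrimeNC) {k : ℕ}
    (h : I ^ k ≤ P) : I ≤ P := by
  induction k with
  | zero =>
    rw [Submodule.pow_zero, Ideal.one_eq_top, top_le_iff] at h
    exact absurd h hP.1
  | succ k ih =>
    rw [Ideal.IsTwoSided.pow_succ] at h
    intro a ha
    by_contra haP
    refine haP (ih (fun b hb => (hP.2.2 a b fun r => h ?_).resolve_left haP) ha)
    exact Ideal.mul_mem_mul (Ideal.mul_mem_right _ _ ha) hb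

theorem le_primeRadical_of_pow_eq_bot {I : Ideal R} [I.IsTwoSided] {k : ℕ} (h : I ^ k = ⊥) :
    I ≤ primeRadical R :=
  le_sInf fun _ hP => le_of_isPrimeNC_of_pow_le hP (h.trans_le bot_le)

instance primeRadical_isTwoSided : (primeRadical R).IsTwoSided where
  mul_mem_of_left b ha := by
    simp only [primeRadical, Submodule.mem_sInf] at ha ⊢
    exact fun P hP => hP.2.1 _ (ha P hP) b

theorem mem_primeRadical_of_forall_mul_mul_mem {a : R} (h : ∀ r : R, a * r * a ∈ primeRadical R) :
    a ∈ primeRadical R := by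
  simp only [primeRadical, Submodule.mem_sInf] at h ⊢
  exact fun P hP => (hP.2.2 a a fun r => h r P hP).elim id id

theorem isSemiprimeNC_of_ker_eq_primeRadical {B : Type*} [Ring B] {π : R →+* B}
    (hsurj : Surjective π) (hker : RingHom.ker π = primeRadical R) : IsSemiprimeNC B := by
  intro a ha
  obtain ⟨a, rfl⟩ := hsurj a
  rw [← RingHom.mem_ker, hker]
  refine mem_primeRadical_of_forall_mul_mul_mem fun r => ?_
  rw [← hker, RingHom.mem_ker, map_mul, map_mul, ha]

theorem isPrimeNC_colon_top {m : Ideal R} (hm : m.IsMaximal) :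
    (m.colon ((⊤ : Ideal R) : Set R)).IsPrimeNC := by
  refine ⟨fun h => hm.ne_top ?_, fun a ha r => Ideal.mul_mem_right r _ ha, fun a b hab => ?_⟩
  · rw [Ideal.eq_top_iff_one] at h ⊢
    simpa using Submodule.mem_colon.mp h 1 trivial
  · refine or_iff_not_imp_right.mpr fun hb => Submodule.mem_colon.mpr fun r _ => ?_
    obtain ⟨t, ht⟩ : ∃ t, b * t ∉ m := by
      by_contra! h
      exact hb (Submodule.mem_colon.mpr fun t _ => h t)
    obtain ⟨x, y, hy, hxy⟩ := hm.exists_inv ht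
    have harb : a * (r * x) * b * t ∈ m := Submodule.mem_colon.mp (hab (r * x)) t trivial
    have hsplit : a * r = a * (r * x) * b * t + a * r * y := by
      calc a * r = a * r * (x * (b * t) + y) := by rw [hxy, mul_one]
        _ = a * (r * x) * b * t + a * r * y := by noncomm_ring
    rw [smul_eq_mul, hsplit]
    exact m.add_mem harb (m.mul_mem_left _ hy)

theorem primeRadical_le_of_isMaximal {m : Ideal R} (hm : m.IsMaximal) : primeRadical R ≤ m := by
  have hle : primeRadical R ≤ m.colon ((⊤ : Ideal R) : Set R) := sInf_le (isPrimeNC_colon_top hm)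
  exact fun a ha => by simpa using Submodule.mem_colon.mp (hle ha) 1 trivial

theorem isNilpotent_primeRadical [IsArtinianRing R] : IsNilpotent (primeRadical R) := by
  obtain ⟨k, hk⟩ := IsSemiprimaryRing.isNilpotent (R := R)
  refine ⟨k, le_bot_iff.mp ((Ideal.pow_right_mono ?_ k).trans hk.le)⟩
  rw [Ring.jacobson_eq_sInf_isMaximal]
  exact le_sInf fun _ hm => primeRadical_le_of_isMaximal hm

theorem isNilpotentIdeal_of_pow_eq_bot {I : Ideal R} {k : ℕ} (h : I ^ k = ⊥) :
    IsNilpotentIdeal I :=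
  ⟨k, by rw [Submodule.pow_succ, h, Ideal.bot_mul]⟩

end PrimeRadical

section Torsion

variable {R B M : Type*} [Ring R] [Ring B] [AddCommGroup M] [Module R M] {π : R →+* B}

theorem smul_eq_smul_of_map_eq (hM : RingHom.ker π ≤ Module.annihilator R M) {a b : R}
    (h : π a = π b) (z : M) : a • z = b • z := by
  rw [← sub_eq_zero, ← sub_smul]
  exact Module.mem_annihilator.mp (hM (by rw [RingHom.mem_ker, map_sub, h, sub_self])) z

theorem exists_isRegElem_smul_iff_exists_mem {S : Submonoid R} (hS : π '' (S : Set R) = regSet B)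
    (hM : RingHom.ker π ≤ Module.annihilator R M) {z : M} :
    (∃ c, IsRegElem (π c) ∧ c • z = 0) ↔ ∃ s ∈ S, s • z = 0 := by
  refine ⟨fun ⟨c, hc, hcz⟩ => ?_, fun ⟨s, hs, hsz⟩ => ⟨s, hS.subset ⟨s, hs, rfl⟩, hsz⟩⟩
  obtain ⟨s, hs, hsc⟩ := hS.superset hc
  exact ⟨s, hs, by rw [smul_eq_smul_of_map_eq hM hsc, hcz]⟩

theorem mem_span_torsion_iff (hsurj : Surjective π) (hore : IsLeftOreSubset (regSet B))
    (hM : RingHom.ker π ≤ Module.annihilator R M) {z : M} :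
    z ∈ Submodule.span R {w : M | ∃ c : R, IsRegElem (π c) ∧ c • w = 0} ↔
      ∃ c : R, IsRegElem (π c) ∧ c • z = 0 := by
  have hlift : ∀ c a : R, IsRegElem (π c) → ∃ t b : R, IsRegElem (π t) ∧ π (t * a) = π (b * c) := by
    intro c a hc
    obtain ⟨t, ht, b, hb⟩ := hore.2.2 (π c) hc (π a)
    obtain ⟨t, rfl⟩ := hsurj t
    obtain ⟨b, rfl⟩ := hsurj b
    exact ⟨t, b, ht, by rw [map_mul, map_mul, hb]⟩
  refine ⟨fun hz => ?_, fun hz => Submodule.subset_span hz⟩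
  induction hz using Submodule.span_induction with
  | mem _ hw => exact hw
  | zero => exact ⟨1, by rw [map_one]; exact hore.1, smul_zero _⟩
  | add z w _ _ hz hw =>
    obtain ⟨c, hc, hcz⟩ := hz
    obtain ⟨d, hd, hdw⟩ := hw
    obtain ⟨t, b, ht, htb⟩ := hlift d c hd
    refine ⟨t * c, by rw [map_mul]; exact hore.2.1 _ ht _ hc, ?_⟩
    rw [smul_add, smul_eq_smul_of_map_eq hM htb w, mul_smul, mul_smul, hcz, hdw, smul_zero,
      smul_zero, add_zero]
  | smul a _ _ hw =>
    obtain ⟨c, hc, hcw⟩ := hw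
    obtain ⟨t, b, ht, htb⟩ := hlift c a hc
    exact ⟨t, ht, by rw [← mul_smul, smul_eq_smul_of_map_eq hM htb, mul_smul, hcw, smul_zero]⟩

end Torsion

section GradedPieces

variable {R : Type u} {B : Type v} [Ring R] [Ring B] {π : R →+* B} {i : ℕ}

theorem grMk_eq_zero {x : R} {hx : x ∈ primeRadical R ^ i} :
    grMk i x hx = 0 ↔ x ∈ primeRadical R ^ (i + 1) := by
  simp [grMk, Submodule.Quotient.mk_eq_zero]

theorem smul_grMk {x : R} (hx : x ∈ primeRadical R ^ i) (a : R) :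
    a • grMk i x hx = grMk i (a * x) (Ideal.mul_mem_left _ a hx) := rfl

theorem primeRadical_le_annihilator_grPiece :
    primeRadical R ≤ Module.annihilator R (grPiece R i) := by
  refine fun a ha => Module.mem_annihilator.mpr fun z => ?_
  obtain ⟨⟨x, hx⟩, rfl⟩ := Submodule.Quotient.mk_surjective _ z
  change a • grMk i x hx = 0
  rw [smul_grMk, grMk_eq_zero, Ideal.IsTwoSided.pow_succ]
  exact Ideal.mul_mem_mul ha hx

theorem primeRadical_le_annihilator_fMod :
    primeRadical R ≤ Module.annihilator R (fMod π i) :=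
  primeRadical_le_annihilator_grPiece.trans <|
    (tauSub π i).mkQ.annihilator_le_of_surjective (tauSub π i).mkQ_surjective

/-- The projection `n ^ i → f_i`, as a linear map. -/
def fProj (π : R →+* B) (i : ℕ) : ↥(primeRadical R ^ i) →ₗ[R] fMod π i :=
  (tauSub π i).mkQ ∘ₗ Submodule.mkQ _

theorem fProj_apply (x : ↥(primeRadical R ^ i)) : fProj π i x = fMk π i x x.2 := rfl

section Kernel

variable (hsurj : Surjective π) (hker : RingHom.ker π = primeRadical R)
  (hore : IsLeftOreSubset (regSet B))
include hsurj hker hore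

theorem fMk_eq_zero_iff {x : R} {hx : x ∈ primeRadical R ^ i} :
    fMk π i x hx = 0 ↔ ∃ c, IsRegElem (π c) ∧ c * x ∈ primeRadical R ^ (i + 1) := by
  rw [fMk, Submodule.Quotient.mk_eq_zero, tauSub,
    mem_span_torsion_iff hsurj hore (hker.trans_le primeRadical_le_annihilator_grPiece)]
  simp_rw [smul_grMk, grMk_eq_zero]

theorem fMk_eq_zero_iff_exists_mem {S : Submonoid R} (hS : π '' (S : Set R) = regSet B) {x : R}
    {hx : x ∈ primeRadical R ^ i} :
    fMk π i x hx = 0 ↔ ∃ s ∈ S, s * x ∈ primeRadical R ^ (i + 1) := by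
  have h := exists_isRegElem_smul_iff_exists_mem hS
    (hker.trans_le (primeRadical_le_annihilator_grPiece (i := i))) (z := grMk i x hx)
  simp_rw [smul_grMk, grMk_eq_zero] at h
  rw [fMk_eq_zero_iff hsurj hker hore, h]

end Kernel

end GradedPieces

section Sufficiency

variable {R : Type u} {B : Type v} [Ring R] [Ring B] {π : R →+* B} {S : Submonoid R} {i : ℕ}

theorem layerChainCondition_ker_zero (hsurj : Surjective π) (hS : π '' (S : Set R) = regSet B)
    (hB : IsLeftGoldie B) (hs : IsSemiprimeNC B) : LayerChainCondition (RingHom.ker π) S 0 := by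
  intro D hD
  obtain ⟨N, hN⟩ := hB.2.exists_forall_isEssentialIn (D := fun k => (D k).map π)
    fun i j hij => Ideal.map_mono (hD hij)
  refine ⟨N, fun k hk x hx _ => ?_⟩
  obtain ⟨c, hc, hcx⟩ := hB.exists_isRegElem_smul_mem hs (π := RingHom.id B) surjective_id
    (by rintro _ rfl; exact zero_mem _) (hN k hk) (Ideal.mem_map_of_mem π hx)
  obtain ⟨s, hs, hsc⟩ := hS.superset hc
  obtain ⟨y, hy, hyx⟩ := (Ideal.mem_map_iff_of_surjective π hsurj).mp hcx
  refine ⟨s, hs, y, hy, by simp [Submodule.pow_zero, Ideal.one_eq_top], ?_⟩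
  rw [zero_add, Submodule.pow_one, RingHom.mem_ker, map_sub, map_mul, hyx, hsc, RingHom.id_apply,
    smul_eq_mul, sub_self]

theorem layerRightCancel_ker_zero (hS : π '' (S : Set R) ⊆ regSet B) :
    LayerRightCancel (RingHom.ker π) S 0 := by
  rintro s hs x - ⟨t, ht, hx⟩
  refine ⟨1, S.one_mem, ?_⟩
  rw [zero_add, Submodule.pow_one, RingHom.mem_ker] at hx ⊢
  rw [map_mul, map_mul] at hx
  rw [one_mul]
  exact (hS ⟨s, hs, rfl⟩).2 _ ((hS ⟨t, ht, rfl⟩).1 _ hx)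

variable (hsurj : Surjective π) (hker : RingHom.ker π = primeRadical R)
include hsurj hker

theorem layerChainCondition_of_noInfiniteIndepFamily (hS : π '' (S : Set R) = regSet B)
    (hB : IsLeftGoldie B) (h : NoInfiniteIndepFamily R (fMod π i)) :
    LayerChainCondition (primeRadical R) S i := by
  have hsemi := isSemiprimeNC_of_ker_eq_primeRadical hsurj hker
  have hann := hker.trans_le (primeRadical_le_annihilator_fMod (π := π) (i := i))
  intro D hD
  let trace (k : ℕ) : Submodule R ↥(primeRadical R ^ i) :=
    Submodule.comap (primeRadical R ^ i).subtype (D k)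
  obtain ⟨N, hN⟩ := h.exists_forall_isEssentialIn (D := fun k => (trace k).map (fProj π i))
    fun _ _ hkl => Submodule.map_mono (Submodule.comap_mono (hD hkl))
  refine ⟨N, fun k hk x hx hxi => ?_⟩
  obtain ⟨c, hc, ⟨y, hyi⟩, hy, hyc⟩ := hB.exists_isRegElem_smul_mem hsemi hsurj hann (hN k hk)
    (Submodule.mem_map_of_mem (p := trace N) (r := ⟨x, hxi⟩) hx)
  obtain ⟨s, hs, hsc⟩ := hS.superset hc
  have hzero : fProj π i (s • ⟨x, hxi⟩ - ⟨y, hyi⟩) = 0 := by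
    rw [map_sub, map_smul, smul_eq_smul_of_map_eq hann hsc, hyc, sub_self]
  rw [fProj_apply, fMk_eq_zero_iff_exists_mem hsurj hker (hB.isLeftOreSubset_regSet hsemi) hS]
    at hzero
  obtain ⟨t, ht, htm⟩ := hzero
  refine ⟨t * s, S.mul_mem ht hs, t * y, Ideal.mul_mem_left _ _ hy, Ideal.mul_mem_left _ _ hyi, ?_⟩
  rwa [mul_assoc, ← mul_sub]

theorem layerRightCancel_of_fMk (hS : π '' (S : Set R) = regSet B)
    (hore : IsLeftOreSubset (regSet B))
    (h : ∀ c : R, IsRegElem (π c) →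
      ∀ (x : R) (hx : x ∈ primeRadical R ^ i) (hxc : x * c ∈ primeRadical R ^ i),
        fMk π i (x * c) hxc = 0 → fMk π i x hx = 0) :
    LayerRightCancel (primeRadical R) S i := fun s hs x hx hxs =>
  (fMk_eq_zero_iff_exists_mem hsurj hker hore hS).mp <| h s (hS.subset ⟨s, hs, rfl⟩) x hx
    (Ideal.mul_mem_right _ _ hx) <| (fMk_eq_zero_iff_exists_mem hsurj hker hore hS).mpr hxs

theorem hasArtinianLeftQuot_of_lifted_submonoid (hB : IsLeftGoldie B)
    (hnil : IsNilpotentIdeal (primeRadical R)) (hreg : (S : Set R) ⊆ regSet R)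
    (hS : π '' (S : Set R) = regSet B)
    (hd : ∀ i : ℕ, 1 ≤ i → primeRadical R ^ i ≠ ⊥ → NoInfiniteIndepFamily R (fMod π i))
    (he : ∀ i : ℕ, 1 ≤ i → primeRadical R ^ i ≠ ⊥ → ∀ c : R, IsRegElem (π c) →
      ∀ (x : R) (hx : x ∈ primeRadical R ^ i) (hxc : x * c ∈ primeRadical R ^ i),
        fMk π i (x * c) hxc = 0 → fMk π i x hx = 0) : HasArtinianLeftQuot R := by
  classical
  have hsemi := isSemiprimeNC_of_ker_eq_primeRadical hsurj hker
  have hpow : ∃ K, primeRadical R ^ K = ⊥ := hnil.imp' (· + 1) fun _ => id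
  have hmin : ∀ i < Nat.find hpow, primeRadical R ^ i ≠ ⊥ := fun i => Nat.find_min hpow
  refine hasArtinianLeftQuot_of_layers hreg (Nat.find_spec hpow) (fun i hi => ?_) fun i hi => ?_
  all_goals obtain rfl | hpos := i.eq_zero_or_pos
  · exact hker ▸ layerChainCondition_ker_zero hsurj hS hB hsemi
  · exact layerChainCondition_of_noInfiniteIndepFamily hsurj hker hS hB (hd i hpos (hmin i hi))
  · exact hker ▸ layerRightCancel_ker_zero hS.subset
  · exact layerRightCancel_of_fMk hsurj hker hS (hB.isLeftOreSubset_regSet hsemi)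
      (he i hpos (hmin i hi))

end Sufficiency

theorem mem_of_mul_mem_of_isUnit {Q : Type*} [Ring Q] [IsNoetherianRing Q] {L : Ideal Q} {u : Q}
    (hu : IsUnit u) (hL : ∀ x ∈ L, x * u ∈ L) {x : Q} (hx : x * u ∈ L) : x ∈ L := by
  let f : Q ⧸ L →ₗ[Q] Q ⧸ L := L.mapQ L (LinearMap.toSpanSingleton Q Q u) hL
  have hfmk (y : Q) : f (Submodule.Quotient.mk y) = Submodule.Quotient.mk (y * u) := rfl
  have hf : Surjective f := by
    intro z
    obtain ⟨y, rfl⟩ := Submodule.Quotient.mk_surjective L z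
    obtain ⟨v, hv⟩ := hu.exists_left_inv
    exact ⟨Submodule.Quotient.mk (y * v), by rw [hfmk, mul_assoc, hv, mul_one]⟩
  rw [← Submodule.Quotient.mk_eq_zero] at hx ⊢
  rw [← hfmk] at hx
  exact IsNoetherian.injective_of_surjective_endomorphism f hf (hx.trans (map_zero f).symm)

namespace IsLeftQuotRing

section Extension

variable {R Q : Type*} [Ring R] [Ring Q] {φ : R →+* Q} (h : IsLeftQuotRing φ)
include h

theorem isRegElem_iff {c : R} : IsRegElem c ↔ IsUnit (φ c) :=
  ⟨h.isUnit c, isRegElem_of_isUnit_map h.inj⟩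

theorem coe_comap_isUnit_submonoid : ((IsUnit.submonoid Q).comap φ : Set R) = regSet R :=
  Set.ext fun _ => h.isRegElem_iff.symm

theorem isLeftOreSubset_regSet : IsLeftOreSubset (regSet R) := by
  rw [← h.coe_comap_isUnit_submonoid]
  refine isLeftOreSubset_of_forall_exists_mul_eq h.inj (fun _ hs => hs) fun q => ?_
  obtain ⟨c, r, hc, hr⟩ := h.denom q
  exact ⟨c, h.isUnit c hc, r, hr⟩

theorem exists_mul_eq_mul {c : R} (hc : IsRegElem c) (p : Q) :
    ∃ e r, IsRegElem e ∧ φ e * p = φ r * φ c := by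
  obtain ⟨u, hu⟩ := h.isUnit c hc
  obtain ⟨e, r, he, her⟩ := h.denom (p * ↑u⁻¹)
  exact ⟨e, r, he, by rw [← her, ← hu, mul_assoc, Units.inv_mul_cancel_right]⟩

theorem mem_map_iff {K : Ideal R} {q : Q} :
    q ∈ K.map φ ↔ ∃ c a, IsRegElem c ∧ a ∈ K ∧ φ c * q = φ a := by
  refine ⟨fun hq => ?_, fun ⟨c, a, hc, ha, hq⟩ =>
    (Ideal.unit_mul_mem_iff_mem _ (h.isUnit c hc)).mp (hq ▸ Ideal.mem_map_of_mem φ ha)⟩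
  have hore := h.isLeftOreSubset_regSet
  induction hq using Submodule.span_induction with
  | mem q hq =>
    obtain ⟨a, ha, rfl⟩ := hq
    exact ⟨1, a, hore.1, ha, by simp⟩
  | zero => exact ⟨1, 0, hore.1, zero_mem K, by simp⟩
  | add q w _ _ hq hw =>
    obtain ⟨c, a, hc, ha, hq⟩ := hq
    obtain ⟨d, b, hd, hb, hw⟩ := hw
    obtain ⟨e, r, he, her⟩ := h.exists_mul_eq_mul hd (φ c)
    refine ⟨e * c, e * a + r * b, hore.2.1 e he c hc,
      add_mem (K.mul_mem_left _ ha) (K.mul_mem_left _ hb), ?_⟩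
    rw [map_add, map_mul, map_mul, map_mul, ← hq, ← hw, mul_add, ← mul_assoc, ← mul_assoc, ← her]
  | smul p q _ hq =>
    obtain ⟨c, a, hc, ha, hq⟩ := hq
    obtain ⟨e, r, he, her⟩ := h.exists_mul_eq_mul hc p
    exact ⟨e, r * a, he, K.mul_mem_left _ ha, by
      rw [smul_eq_mul, ← mul_assoc, her, mul_assoc, hq, map_mul]⟩

section Noetherian

variable [IsNoetherianRing Q]

theorem isTwoSided_map (K : Ideal R) [K.IsTwoSided] : (K.map φ).IsTwoSided where
  mul_mem_of_left {q} p hq := by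
    have hmul : ∀ w ∈ K.map φ, ∀ r, w * φ r ∈ K.map φ := fun w hw r => by
      obtain ⟨c, a, hc, ha, hw⟩ := h.mem_map_iff.mp hw
      exact h.mem_map_iff.mpr ⟨c, a * r, hc, Ideal.mul_mem_right _ _ ha, by
        rw [← mul_assoc, hw, map_mul]⟩
    obtain ⟨e, r, he, her⟩ := h.denom p
    obtain ⟨u, hu⟩ := h.isUnit e he
    have hqu : q * ↑u⁻¹ ∈ K.map φ :=
      mem_of_mul_mem_of_isUnit (h.isUnit e he) (fun w hw => hmul w hw e) (by
        rwa [← hu, Units.inv_mul_cancel_right])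
    have hqp : q * p = q * ↑u⁻¹ * φ r := by
      rw [← her, ← hu, mul_assoc, Units.inv_mul_cancel_left]
    exact hqp ▸ hmul _ hqu r

theorem map_ideal_mul (I J : Ideal R) [I.IsTwoSided] : (I * J).map φ = I.map φ * J.map φ := by
  have := h.isTwoSided_map I
  refine le_antisymm (Ideal.map_le_iff_le_comap.mpr (Ideal.mul_le.mpr fun a ha b hb => ?_))
    (Ideal.mul_le.mpr fun q hq w hw => ?_)
  · rw [Ideal.mem_comap, map_mul]
    exact Ideal.mul_mem_mul (Ideal.mem_map_of_mem φ ha) (Ideal.mem_map_of_mem φ hb)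
  · obtain ⟨c, b, hc, hb, hw⟩ := h.mem_map_iff.mp hw
    obtain ⟨u, hu⟩ := h.isUnit c hc
    obtain ⟨e, a, he, ha, hq⟩ := h.mem_map_iff.mp (Ideal.mul_mem_right (↑u⁻¹ : Q) _ hq)
    refine h.mem_map_iff.mpr ⟨e, a * b, he, Ideal.mul_mem_mul ha hb, ?_⟩
    rw [map_mul, ← hq, ← hw, ← hu, mul_assoc, mul_assoc, Units.inv_mul_cancel_left]

theorem map_ideal_pow (I : Ideal R) [I.IsTwoSided] (k : ℕ) : (I ^ k).map φ = I.map φ ^ k := by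
  induction k with
  | zero => simp only [Submodule.pow_zero, Ideal.one_eq_top, Ideal.map_top]
  | succ k ih => rw [Submodule.pow_succ, Submodule.pow_succ, h.map_ideal_mul, ih]

theorem isPrimeNC_comap {P : Ideal Q} (hP : P.IsPrimeNC) : (P.comap φ).IsPrimeNC := by
  refine ⟨Ideal.comap_ne_top φ hP.1, fun a ha r => ?_, fun a b hab => hP.2.2 _ _ fun q => ?_⟩
  · rw [Ideal.mem_comap, map_mul]
    exact hP.2.1 _ ha _
  let I : Ideal R := (P.comap φ).colon ((Ideal.span {b} : Ideal R) : Set R)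
  have haI : a ∈ I := Submodule.mem_colon.mpr fun y hy => by
    obtain ⟨r, rfl⟩ := Ideal.mem_span_singleton'.mp hy
    rw [smul_eq_mul, ← mul_assoc]
    exact hab r
  have := h.isTwoSided_map I
  obtain ⟨c, r, hc, hr⟩ := h.denom q
  obtain ⟨u, hu⟩ := h.isUnit c hc
  have hq : q = ↑u⁻¹ * φ r := by rw [← hr, ← hu, Units.inv_mul_cancel_left]
  obtain ⟨e, x, he, hx, hex⟩ := h.mem_map_iff.mp
    (Ideal.mul_mem_right (↑u⁻¹ : Q) _ (Ideal.mem_map_of_mem φ haI))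
  have hxb : φ (x * (r * b)) ∈ P :=
    Submodule.mem_colon.mp hx _ (Ideal.mul_mem_left _ r (Ideal.mem_span_singleton_self b))
  rw [← Ideal.unit_mul_mem_iff_mem P (h.isUnit e he)]
  rwa [map_mul, map_mul, ← hex, mul_assoc (φ e), mul_assoc (φ a), ← mul_assoc (↑u⁻¹ : Q), ← hq,
    ← mul_assoc (φ a)] at hxb

theorem noInfiniteIndepFamily {M : Type*} [AddCommGroup M] [Module R M] {K : Ideal R}
    {f : K →ₗ[R] M} (hf : Surjective f)
    (htf : ∀ c : R, IsRegElem c → ∀ m : M, c • m = 0 → m = 0) : NoInfiniteIndepFamily R M := by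
  rintro ⟨L, hL, hind⟩
  let D (k : ℕ) : Submodule R M := ⨆ j < k, L j
  let F : ℕ →o Ideal Q :=
    { toFun k := Ideal.map φ (Submodule.map K.subtype (Submodule.comap f (D k)))
      monotone' i j hij := Ideal.map_mono (Submodule.map_mono (Submodule.comap_mono
        (biSup_mono fun _ hk => hk.trans_le hij))) }
  obtain ⟨N, hN⟩ := monotone_stabilizes_iff_noetherian.mpr ‹IsNoetherianRing Q› F
  obtain ⟨z, hz, hz0⟩ := (Submodule.ne_bot_iff _).mp (hL N)
  obtain ⟨x, rfl⟩ := hf z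
  have hx : φ x ∈ F (N + 1) :=
    Ideal.mem_map_of_mem φ
      ⟨x, Submodule.mem_iSup_of_mem N (Submodule.mem_iSup_of_mem N.lt_succ_self hz), rfl⟩
  rw [← hN (N + 1) N.le_succ] at hx
  obtain ⟨c, _, hc, ⟨y, hy, rfl⟩, hcy⟩ := h.mem_map_iff.mp hx
  rw [← map_mul] at hcy
  have hcy : c • x = y := Subtype.ext (h.inj hcy)
  have hcD : c • f x ∈ D N := by
    rw [← map_smul, hcy]
    exact hy
  have hD : D N ≤ ⨆ j ≠ N, L j := biSup_mono fun j hj => hj.ne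
  exact hz0 (htf c hc _
    (Submodule.disjoint_def.mp (hind N) _ (Submodule.smul_mem _ _ hz) (hD hcD)))

theorem accLeftAnnihilators : ACCLeftAnnihilators R := by
  intro f hf hmono
  let F : ℕ →o Ideal Q :=
    { toFun i := (⊥ : Ideal Q).colon (φ '' {s | ∀ x ∈ f i, x * s = 0})
      monotone' i j hij :=
        Submodule.colon_mono le_rfl (Set.image_mono fun s hs x hx => hs x (hmono i j hij hx)) }
  have hF : ∀ i r, r ∈ f i ↔ φ r ∈ F i := by
    intro i r
    obtain ⟨A, hA⟩ := hf i
    refine ⟨fun hr => Submodule.mem_colon.mpr ?_, fun hr => hA ▸ fun s hs => h.inj ?_⟩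
    · rintro _ ⟨s, hs, rfl⟩
      rw [smul_eq_mul, ← map_mul, hs r hr, map_zero, Ideal.mem_bot]
    · have hs' : ∀ x ∈ f i, x * s = 0 := fun x hx => (hA ▸ hx : x ∈ {r | ∀ s ∈ A, r * s = 0}) s hs
      rw [map_mul, map_zero]
      exact Submodule.mem_colon.mp hr _ ⟨s, hs', rfl⟩
  obtain ⟨N, hN⟩ := monotone_stabilizes_iff_noetherian.mpr ‹IsNoetherianRing Q› F
  exact ⟨N, fun k hk => Set.ext fun r => by rw [hF, hF, hN k hk]⟩

theorem isLeftGoldie : IsLeftGoldie R :=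
  ⟨h.accLeftAnnihilators, h.noInfiniteIndepFamily (K := ⊤) (f := Submodule.topEquiv.toLinearMap)
    Submodule.topEquiv.surjective fun _ hc => hc.1⟩

end Noetherian

section Artinian

variable [IsArtinianRing Q]

theorem comap_primeRadical : (primeRadical Q).comap φ = primeRadical R := by
  refine le_antisymm ?_ fun x hx => ?_
  · obtain ⟨k, hk⟩ := isNilpotent_primeRadical (R := Q)
    refine le_primeRadical_of_pow_eq_bot (k := k) ?_
    rw [← Ideal.map_eq_bot_iff_of_injective h.inj, h.map_ideal_pow, eq_bot_iff]
    exact (Ideal.pow_right_mono Ideal.map_comap_le k).trans hk.le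
  · rw [Ideal.mem_comap, primeRadical, Submodule.mem_sInf]
    exact fun P hP => Submodule.mem_sInf.mp hx _ (h.isPrimeNC_comap hP)

theorem map_mem_primeRadical {r : R} : φ r ∈ primeRadical Q ↔ r ∈ primeRadical R := by
  rw [← h.comap_primeRadical, Ideal.mem_comap]

theorem map_primeRadical : (primeRadical R).map φ = primeRadical Q := by
  refine le_antisymm (Ideal.map_le_iff_le_comap.mpr h.comap_primeRadical.ge) fun q hq => ?_
  obtain ⟨c, r, hc, hr⟩ := h.denom q
  exact h.mem_map_iff.mpr
    ⟨c, r, hc, h.map_mem_primeRadical.mp (hr ▸ Ideal.mul_mem_left _ _ hq), hr⟩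

theorem map_primeRadical_pow (k : ℕ) : (primeRadical R ^ k).map φ = primeRadical Q ^ k := by
  rw [h.map_ideal_pow, h.map_primeRadical]

theorem primeRadical_pow_eq_bot_iff (k : ℕ) : primeRadical Q ^ k = ⊥ ↔ primeRadical R ^ k = ⊥ := by
  rw [← h.map_primeRadical_pow, Ideal.map_eq_bot_iff_of_injective h.inj]

theorem map_mem_primeRadical_pow {k : ℕ} {r : R} :
    φ r ∈ primeRadical Q ^ k ↔ ∃ c, IsRegElem c ∧ c * r ∈ primeRadical R ^ k := by
  rw [← h.map_primeRadical_pow, h.mem_map_iff]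
  constructor
  · rintro ⟨c, a, hc, ha, hca⟩
    rw [← map_mul] at hca
    exact ⟨c, hc, h.inj hca ▸ ha⟩
  · rintro ⟨c, hc, hcr⟩
    exact ⟨c, c * r, hc, hcr, (map_mul φ c r).symm⟩

end Artinian

end Extension

end IsLeftQuotRing

theorem isUnit_map_iff_of_isNilpotent_ker {Q E : Type*} [Ring Q] [Ring E] {θ : Q →+* E}
    (hθ : Surjective θ) (hker : ∀ x ∈ RingHom.ker θ, IsNilpotent x) {q : Q} :
    IsUnit (θ q) ↔ IsUnit q := by
  have hone : ∀ x, θ x = 1 → IsUnit x := fun x hx => by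
    have hnil := hker (x - 1) (by rw [RingHom.mem_ker, map_sub, hx, map_one, sub_self])
    simpa using hnil.isUnit_one_add
  refine ⟨fun hq => ?_, fun hq => hq.map θ⟩
  obtain ⟨⟨e, hqe⟩, ⟨e', heq⟩⟩ := isUnit_iff_exists_and_exists.mp hq
  obtain ⟨p, rfl⟩ := hθ e
  obtain ⟨p', rfl⟩ := hθ e'
  obtain ⟨a, ha⟩ := (hone (q * p) (by rw [map_mul, hqe])).exists_right_inv
  obtain ⟨b, hb⟩ := (hone (p' * q) (by rw [map_mul, heq])).exists_left_inv
  exact isUnit_iff_exists_and_exists.mpr ⟨⟨p * a, by rw [← mul_assoc, ha]⟩,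
    ⟨b * p', by rw [mul_assoc, hb]⟩⟩

theorem isUnit_mk_primeRadical_iff {Q : Type*} [Ring Q] [IsArtinianRing Q] {q : Q} :
    IsUnit (Ideal.Quotient.mk (primeRadical Q) q) ↔ IsUnit q := by
  refine isUnit_map_iff_of_isNilpotent_ker Ideal.Quotient.mk_surjective fun x hx => ?_
  rw [Ideal.mk_ker] at hx
  obtain ⟨k, hk⟩ := isNilpotent_primeRadical (R := Q)
  exact ⟨k, (Ideal.mem_bot).mp (hk.le (Ideal.pow_mem_pow hx k))⟩

namespace IsLeftQuotRing

theorem exists_leftQuotData {B : Type v} {E : Type*} [Ring B] [Ring E] {ψ : B →+* E}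
    (h : IsLeftQuotRing ψ) :
    ∃ (e : LeftQuotData B) (σ : E ≃+* e.Q), (σ : E →+* e.Q).comp ψ = e.φ := by
  have : Small.{v} E := by
    choose c r hc hr using h.denom
    refine small_of_injective (f := fun x => (c x, r x)) fun x y hxy => ?_
    obtain ⟨hcxy, hrxy⟩ := Prod.mk.inj hxy
    refine (h.isUnit _ (hc x)).mul_left_cancel ?_
    rw [hr x, hcxy, hr y, hrxy]
  let σ : E ≃+* Shrink.{v} E := (Shrink.ringEquiv E).symm
  refine ⟨⟨Shrink.{v} E, (σ : E →+* Shrink.{v} E).comp ψ, ?_, fun b hb => ?_, fun x => ?_⟩, σ, rfl⟩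
  · exact σ.injective.comp h.inj
  · exact (h.isUnit b hb).map σ
  · obtain ⟨c, r, hc, hr⟩ := h.denom (σ.symm x)
    exact ⟨c, r, hc, by simp [← hr]⟩

section Reduction

variable {R B Q : Type*} [Ring R] [Ring B] [Ring Q] [IsArtinianRing Q] {φ : R →+* Q} {π : R →+* B}
  (h : IsLeftQuotRing φ) (hsurj : Surjective π) (hker : RingHom.ker π = primeRadical R)
include h hsurj hker

/-- The map `R / n → Q / J` induced by `R → Q`, where `J` is the prime radical of `Q` and `R / n`
is realized by `π`. -/
noncomputable def reduction : B →+* Q ⧸ primeRadical Q :=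
  π.liftOfSurjective hsurj ⟨(Ideal.Quotient.mk (primeRadical Q)).comp φ, fun r hr => by
    rw [hker, ← h.map_mem_primeRadical] at hr
    exact Ideal.Quotient.eq_zero_iff_mem.mpr hr⟩

theorem reduction_comp :
    (h.reduction hsurj hker).comp π = (Ideal.Quotient.mk (primeRadical Q)).comp φ :=
  RingHom.liftOfSurjective_comp π hsurj _

theorem reduction_apply (r : R) :
    h.reduction hsurj hker (π r) = Ideal.Quotient.mk (primeRadical Q) (φ r) :=
  RingHom.congr_fun (h.reduction_comp hsurj hker) r

theorem reduction_injective : Injective (h.reduction hsurj hker) := by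
  refine (injective_iff_map_eq_zero _).mpr fun b hb => ?_
  obtain ⟨r, rfl⟩ := hsurj b
  rwa [h.reduction_apply hsurj hker, Ideal.Quotient.eq_zero_iff_mem, h.map_mem_primeRadical,
    ← hker, RingHom.mem_ker] at hb

theorem isLeftQuotRing_reduction : IsLeftQuotRing (h.reduction hsurj hker) := by
  have := (Ideal.Quotient.mk_surjective (I := primeRadical Q)).isArtinianRing
  refine isLeftQuotRing_of_injective (h.reduction_injective hsurj hker) fun x => ?_
  obtain ⟨q, rfl⟩ := Ideal.Quotient.mk_surjective x
  obtain ⟨c, r, hc, hr⟩ := h.denom q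
  refine ⟨π c, π r, ?_, ?_⟩ <;> simp only [h.reduction_apply hsurj hker]
  · exact (h.isUnit c hc).map _
  · rw [← map_mul, hr]

theorem isRegElem_map_iff {c : R} : IsRegElem (π c) ↔ IsRegElem c := by
  rw [(h.isLeftQuotRing_reduction hsurj hker).isRegElem_iff, h.reduction_apply,
    isUnit_mk_primeRadical_iff, h.isRegElem_iff]

theorem image_regSet : π '' regSet R = regSet B := by
  refine Set.Subset.antisymm ?_ fun b hb => ?_
  · rintro _ ⟨c, hc, rfl⟩
    exact (h.isRegElem_map_iff hsurj hker).mpr hc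
  · obtain ⟨c, rfl⟩ := hsurj b
    exact ⟨c, (h.isRegElem_map_iff hsurj hker).mp hb, rfl⟩

theorem isLeftGoldie_of_ker_eq_primeRadical : IsLeftGoldie B :=
  have := (Ideal.Quotient.mk_surjective (I := primeRadical Q)).isArtinianRing
  (h.isLeftQuotRing_reduction hsurj hker).isLeftGoldie

theorem exists_reduction : ∃ (e : LeftQuotData B) (θ : Q →+* e.Q), Surjective θ ∧
    RingHom.ker θ = primeRadical Q ∧ θ.comp φ = e.φ.comp π := by
  obtain ⟨e, σ, he⟩ := (h.isLeftQuotRing_reduction hsurj hker).exists_leftQuotData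
  refine ⟨e, (σ : _ →+* e.Q).comp (Ideal.Quotient.mk (primeRadical Q)),
    σ.surjective.comp Ideal.Quotient.mk_surjective, ?_, ?_⟩
  · ext q
    simp [RingHom.mem_ker, Ideal.Quotient.eq_zero_iff_mem]
  · rw [← he, RingHom.comp_assoc, RingHom.comp_assoc, h.reduction_comp]

theorem fMk_eq_zero_iff_map_mem {i : ℕ} {x : R} {hx : x ∈ primeRadical R ^ i} :
    fMk π i x hx = 0 ↔ φ x ∈ primeRadical Q ^ (i + 1) := by
  rw [fMk_eq_zero_iff hsurj hker (h.isLeftQuotRing_reduction hsurj hker).isLeftOreSubset_regSet,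
    h.map_mem_primeRadical_pow]
  simp_rw [h.isRegElem_map_iff hsurj hker]

theorem noInfiniteIndepFamily_fMod (i : ℕ) : NoInfiniteIndepFamily R (fMod π i) := by
  have hf : Surjective (fProj π i) :=
    (Submodule.mkQ_surjective _).comp (Submodule.mkQ_surjective _)
  refine h.noInfiniteIndepFamily hf fun c hc m hm => ?_
  obtain ⟨x, rfl⟩ := hf m
  rw [← map_smul, fProj_apply, h.fMk_eq_zero_iff_map_mem hsurj hker, Submodule.coe_smul,
    smul_eq_mul, map_mul, Ideal.unit_mul_mem_iff_mem _ (h.isUnit c hc)] at hm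
  rwa [fProj_apply, h.fMk_eq_zero_iff_map_mem hsurj hker]

theorem fMk_eq_zero_of_mul {i : ℕ} {c x : R} {hx : x ∈ primeRadical R ^ i}
    {hxc : x * c ∈ primeRadical R ^ i} (hc : IsRegElem (π c)) (h0 : fMk π i (x * c) hxc = 0) :
    fMk π i x hx = 0 := by
  rw [h.fMk_eq_zero_iff_map_mem hsurj hker] at h0 ⊢
  obtain ⟨u, hu⟩ := h.isUnit c ((h.isRegElem_map_iff hsurj hker).mp hc)
  rw [map_mul, ← hu] at h0
  simpa using Ideal.mul_mem_right (↑u⁻¹ : Q) _ h0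

section LiftedSubmonoid

variable {S : Submonoid R} (hS : π '' (S : Set R) = regSet B)
include hS

/-- A denominator `c` of `j ∈ J ^ k` may be replaced by a lift `s ∈ S` of `π c` at the cost of
`φ (s - c) * j ∈ J ^ (k + 1)`, and `J` is nilpotent. -/
theorem exists_mem_submonoid (q : Q) : ∃ s ∈ S, ∃ r, φ s * q = φ r := by
  suffices key : ∀ k, ∃ s ∈ S, ∃ r, φ s * q - φ r ∈ primeRadical Q ^ k by
    obtain ⟨k, hk⟩ := isNilpotent_primeRadical (R := Q)
    obtain ⟨s, hs, r, hr⟩ := key k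
    exact ⟨s, hs, r, sub_eq_zero.mp (Ideal.mem_bot.mp (hk.le hr))⟩
  intro k
  induction k with
  | zero => exact ⟨1, S.one_mem, 0, by simp [Submodule.pow_zero, Ideal.one_eq_top]⟩
  | succ k ih =>
    obtain ⟨t, ht, r, hj⟩ := ih
    obtain ⟨c, y, hc, hy⟩ := h.denom (φ t * q - φ r)
    obtain ⟨s, hs, hsc⟩ := hS.superset ((h.isRegElem_map_iff hsurj hker).mpr hc)
    have hsc : s - c ∈ primeRadical R := by
      rw [← hker, RingHom.mem_ker, map_sub, hsc, sub_self]
    have hstep : φ (s * t) * q - φ (s * r + y) = φ (s - c) * (φ t * q - φ r) := by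
      rw [map_sub, sub_mul, hy, map_add, map_mul, map_mul]
      noncomm_ring
    refine ⟨s * t, S.mul_mem hs ht, s * r + y, ?_⟩
    rw [hstep, Ideal.IsTwoSided.pow_succ]
    exact Ideal.mul_mem_mul (h.map_mem_primeRadical.mpr hsc) hj

variable (hreg : (S : Set R) ⊆ regSet R)
include hreg

theorem isLeftOreSubset_submonoid : IsLeftOreSubset (S : Set R) :=
  isLeftOreSubset_of_forall_exists_mul_eq h.inj (fun _ hs => h.isUnit _ (hreg hs))
    (h.exists_mem_submonoid hsurj hker hS)

theorem primeRadical_eq_setOf :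
    (primeRadical Q : Set Q) = {q | ∃ c ∈ S, ∃ a ∈ primeRadical R, φ c * q = φ a} := by
  refine Set.Subset.antisymm (fun q hq => ?_) ?_
  · obtain ⟨s, hs, r, hr⟩ := h.exists_mem_submonoid hsurj hker hS q
    exact ⟨s, hs, r, h.map_mem_primeRadical.mp (hr ▸ Ideal.mul_mem_left _ _ hq), hr⟩
  · rintro q ⟨c, hc, a, ha, hq⟩
    exact (Ideal.unit_mul_mem_iff_mem _ (h.isUnit c (hreg hc))).mp
      (hq ▸ h.map_mem_primeRadical.mpr ha)

end LiftedSubmonoid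

end Reduction

end IsLeftQuotRing

/-- **Theorem (`C2Sep12`).** Let `R` be a ring, `n` its prime radical, `R̄ = R/n` (realized
by a surjective `π` with kernel `n`).  TFAE: (1) `R` has a left Artinian left quotient ring;
(2) (a) `R̄` is a left Goldie ring, (b) `n` is nilpotent, (c') there is a submonoid
`C'' ⊆ C` whose image in `R̄` is `C̄`, (d) for `1 ≤ i ≤ ν` the `R̄`-module `f_i` contains no
infinite direct sum of nonzero submodules, (e) right multiplication by each `c̄ ∈ C̄` on
`f_i` is injective.  Moreover, if these conditions hold then for any such submonoid `C''`:
`C''` is a left Ore set in `R`, `C''⁻¹R = Q`, `C''⁻¹n` is the prime radical of `Q` and is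
nilpotent of nilpotency degree `ν`, and `Q/C''⁻¹n → Q̄`, `c⁻¹r ↦ c̄⁻¹r̄`, is a ring
isomorphism (encoded by a surjective `θ : Q → Q̄` with kernel `C''⁻¹n` and `θ ∘ φ = ψ ∘ π`). -/
theorem left_artinian_left_quotient_ring_criterion_lifted_submonoid
    {R : Type u} [Ring R] (Rbar : Type v) [Ring Rbar] (π : R →+* Rbar)
    (hπsurj : Function.Surjective π) (hπker : RingHom.ker π = primeRadical R) :
    (HasArtinianLeftQuot R ↔
      (IsLeftGoldie Rbar ∧
        IsNilpotentIdeal (primeRadical R) ∧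
        (∃ C'' : Submonoid R, (↑C'' : Set R) ⊆ regSet R ∧
          π '' (↑C'' : Set R) = {x : Rbar | IsRegElem x}) ∧
        (∀ i : ℕ, 1 ≤ i → primeRadical R ^ i ≠ ⊥ → NoInfiniteIndepFamily R (fMod π i)) ∧
        (∀ i : ℕ, 1 ≤ i → primeRadical R ^ i ≠ ⊥ →
          ∀ c : R, IsRegElem (π c) →
            ∀ (x : R) (hx : x ∈ primeRadical R ^ i) (hxc : x * c ∈ primeRadical R ^ i),
              fMk π i (x * c) hxc = 0 → fMk π i x hx = 0))) ∧
    (HasArtinianLeftQuot R →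
      ∀ C'' : Submonoid R, (↑C'' : Set R) ⊆ regSet R →
        π '' (↑C'' : Set R) = {x : Rbar | IsRegElem x} →
        IsLeftOreSubset (↑C'' : Set R) ∧
        ∀ d : LeftQuotData R, IsArtinianRing d.Q →
          (∀ q : d.Q, ∃ c ∈ C'', ∃ r : R, d.φ c * q = d.φ r) ∧
          ((↑(primeRadical d.Q) : Set d.Q) =
            {q : d.Q | ∃ c ∈ C'', ∃ a ∈ primeRadical R, d.φ c * q = d.φ a}) ∧
          IsNilpotentIdeal (primeRadical d.Q) ∧
          (∀ k : ℕ, primeRadical d.Q ^ k = ⊥ ↔ primeRadical R ^ k = ⊥) ∧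
          ∃ (e : LeftQuotData Rbar) (θ : d.Q →+* e.Q),
            Function.Surjective θ ∧ RingHom.ker θ = primeRadical d.Q ∧
              θ.comp d.φ = e.φ.comp π) := by
  refine ⟨⟨?_, ?_⟩, ?_⟩
  · rintro ⟨⟨Q, φ, h⟩, hQ : IsArtinianRing Q⟩
    refine ⟨h.isLeftGoldie_of_ker_eq_primeRadical hπsurj hπker, ?_,
      ⟨(IsUnit.submonoid Q).comap φ, h.coe_comap_isUnit_submonoid.subset, ?_⟩,
      fun i _ _ => h.noInfiniteIndepFamily_fMod hπsurj hπker i,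
      fun i _ _ c hc x hx hxc => h.fMk_eq_zero_of_mul hπsurj hπker hc⟩
    · obtain ⟨k, hk⟩ := isNilpotent_primeRadical (R := Q)
      exact isNilpotentIdeal_of_pow_eq_bot ((h.primeRadical_pow_eq_bot_iff k).mp hk)
    · rw [h.coe_comap_isUnit_submonoid]
      exact h.image_regSet hπsurj hπker
  · rintro ⟨hB, hnil, ⟨S, hreg, hS⟩, hd, he⟩
    exact hasArtinianLeftQuot_of_lifted_submonoid hπsurj hπker hB hnil hreg hS hd he
  · rintro ⟨d₀, hd₀⟩ S hreg hS
    refine ⟨d₀.quot.isLeftOreSubset_submonoid hπsurj hπker hS hreg, fun d hd =>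
      ⟨d.quot.exists_mem_submonoid hπsurj hπker hS,
        d.quot.primeRadical_eq_setOf hπsurj hπker hS hreg, ?_, d.quot.primeRadical_pow_eq_bot_iff,
        d.quot.exists_reduction hπsurj hπker⟩⟩
    obtain ⟨k, hk⟩ := isNilpotent_primeRadical (R := d.Q)
    exact isNilpotentIdeal_of_pow_eq_bot hk
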